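/- Let k be a finite field with q elements and M a connected linear algebraic group over k of dimension d. Then (q-1)^d ≤ #M(k) ≤ (q+1)^d. -/

import Mathlib

/-
Let `F` be the `q`-Frobenius of the group `G = Spec A`, of dimension `d`, and let `L x = x⁻¹ F(x)`
be its Lang map. Connectedness makes `A` a domain, because over an algebraic closure the irreducible
components of `G` are disjoint. If `V ∋ 1` is the sum of a finite-dimensional generating
subcoalgebra of `A` and of its image under the antipode, then `L` maps `V` into `V ^ (q + 1)`, since
`F` raises functions to the power `q`, while `F = x · L x` puts the `q`-th powers of elements of `V`
into `V · L(V)`. The bounds follow from the growth `dim V ^ n ≍ n ^ d`.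

Upper bound: the `N` translations by rational points leave `L` invariant, so `A` has rank at least
`N` over `L(A)`. Hence `N · dim V ^ n ≤ dim V ^ ((q + 1) n + s)` for some `s`, and
`N ≤ (q + 1) ^ d`.

Lower bound: the coordinate ring of the fibre of `L` over the identity satisfies `x ^ q = x`, so its
dimension is at most `N`, and by Nakayama `N` elements generate `A` over `L(A)` up to a denominator.
By the pigeonhole principle a long product of elements of a finite basis of `V` contains a `q`-th
power, so `V ^ (c + (q - 1) n) ⊆ V ^ c · L(V ^ n)` for some `c`. Up to shifts of `n` by constants
this gives `dim V ^ ((q - 1) n) ≤ N · dim V ^ n`, hence `(q - 1) ^ d ≤ N`.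
-/

section KrullDimension

theorem ringKrullDim_le_of_isIntegral {R S : Type*} [CommRing R] [CommRing S] [Algebra R S]
    [Algebra.IsIntegral R S] : ringKrullDim S ≤ ringKrullDim R :=
  Order.krullDim_le_of_strictMono (PrimeSpectrum.comap (algebraMap R S)) fun P Q hPQ =>
    Ideal.IsIntegral.comap_lt_comap (I := P.asIdeal) (J := Q.asIdeal) hPQ

theorem nontrivial_of_ringKrullDim_eq_natCast {R : Type*} [CommRing R] {d : ℕ}
    (hdim : ringKrullDim R = d) : Nontrivial R := by
  by_contra! h
  exact WithBot.natCast_ne_bot d (hdim.symm.trans ringKrullDim_eq_bot_of_subsingleton)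

theorem ringKrullDim_eq_of_isIntegral_of_injective {R S : Type*} [CommRing R] [CommRing S]
    [Algebra R S] [Algebra.IsIntegral R S] (hinj : Function.Injective (algebraMap R S)) :
    ringKrullDim S = ringKrullDim R := by
  refine le_antisymm ringKrullDim_le_of_isIntegral (iSup_le fun l => ?_)
  obtain ⟨Q, -, hQ, hQl⟩ := Ideal.exists_ideal_over_prime_of_isIntegral (S := S)
    l.head.asIdeal ⊥ (by
      rw [← RingHom.ker_eq_comap_bot, (RingHom.injective_iff_ker_eq_bot _).1 hinj]
      exact bot_le)
  have : Q.LiesOver l.head.asIdeal := ⟨hQl.symm⟩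
  obtain ⟨l', hl', -, -⟩ := Ideal.exists_ltSeries_of_hasGoingUp (S := S) l Q
  rw [← hl']
  exact le_iSup (fun p : LTSeries (PrimeSpectrum S) => ((p.length : ℕ∞) : WithBot ℕ∞)) l'

theorem exists_finite_inj_algHom_of_ringKrullDim_eq {k A : Type*} [Field k] [CommRing A]
    [Algebra k A] [Algebra.FiniteType k A] {d : ℕ} (hdim : ringKrullDim A = d) :
    ∃ g : MvPolynomial (Fin d) k →ₐ[k] A, Function.Injective g ∧ g.Finite := by
  have := nontrivial_of_ringKrullDim_eq_natCast hdim
  obtain ⟨s, g, hinj, hfin⟩ := exists_finite_inj_algHom_of_fg k A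
  have hs : s = d := by
    let := g.toRingHom.toAlgebra
    have : Module.Finite (MvPolynomial (Fin s) k) A := hfin
    have h := ringKrullDim_eq_of_isIntegral_of_injective (R := MvPolynomial (Fin s) k) hinj
    rw [hdim, MvPolynomial.ringKrullDim_of_isNoetherianRing, ringKrullDim_eq_zero_of_field,
      zero_add, Nat.card_fin] at h
    exact_mod_cast h.symm
  subst hs
  exact ⟨g, hinj, hfin⟩

theorem injective_of_finite_range_of_ringKrullDim_eq {k A : Type*} [CommRing k] [CommRing A]
    [IsDomain A] [Algebra k A] {d : ℕ} (hdim : ringKrullDim A = d) (L : A →ₐ[k] A)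
    [Module.Finite L.range A] : Function.Injective L := by
  rw [injective_iff_map_eq_zero]
  intro a ha
  by_contra hne
  have h : ringKrullDim A + 1 ≤ ringKrullDim A := calc
    ringKrullDim A + 1 ≤ ringKrullDim L.range + 1 :=
      add_le_add_left (ringKrullDim_le_of_isIntegral (R := L.range)) 1
    _ ≤ ringKrullDim A :=
      ringKrullDim_succ_le_of_surjective L.rangeRestrict.toRingHom L.rangeRestrict_surjective
        (mem_nonZeroDivisors_of_ne_zero hne) (Subtype.ext ha)
  rw [hdim] at h
  exact Nat.not_succ_le_self d (by exact_mod_cast h)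

end KrullDimension

section Filtration

theorem exists_le_of_fg_of_le_iSup {R M : Type*} [Semiring R] [AddCommMonoid M] [Module R M]
    {B : ℕ → Submodule R M} (hB : Monotone B) {W : Submodule R M} (hW : W.FG)
    (h : W ≤ ⨆ n, B n) : ∃ n, W ≤ B n := by
  rw [Submodule.fg_iff_compact, CompleteLattice.isCompactElement_iff_le_of_directed_sSup_le] at hW
  obtain ⟨_, ⟨n, rfl⟩, hn⟩ :=
    hW (Set.range B) (Set.range_nonempty B) hB.directed_le.directedOn_range h
  exact ⟨n, hn⟩

variable {k A : Type*} [Field k] [CommRing A] [Algebra k A]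

theorem finrank_mul_le {U W : Submodule k A} (hU : U.FG) (hW : W.FG) :
    Module.finrank k ↥(U * W) ≤ Module.finrank k U * Module.finrank k W := by
  have := Module.Finite.iff_fg.2 hU
  have := Module.Finite.iff_fg.2 hW
  rw [← Submodule.mulMap_range, ← Module.finrank_tensorProduct]
  exact LinearMap.finrank_range_le _

theorem restrictScalars_span_eq_mul_toSubmodule (R : Subalgebra k A) (W : Submodule k A) :
    (Submodule.span R (W : Set A)).restrictScalars k = W * Subalgebra.toSubmodule R := by
  apply le_antisymm
  · intro a ha
    refine Submodule.span_induction (p := fun x _ => x ∈ W * Subalgebra.toSubmodule R)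
      (fun x hx => ?_) (zero_mem _) (fun _ _ _ _ => add_mem) (fun r x _ hx => ?_) ha
    · simpa using Submodule.mul_mem_mul hx ((Subalgebra.mem_toSubmodule R).2 R.one_mem)
    · have := Submodule.mul_mem_mul hx ((Subalgebra.mem_toSubmodule R).2 r.2)
      rw [mul_assoc, R.isIdempotentElem_toSubmodule.eq] at this
      rwa [Subalgebra.smul_def, smul_eq_mul, mul_comm (r : A)]
  · refine Submodule.mul_le.2 fun w hw r hr => ?_
    rw [mul_comm]
    exact Submodule.smul_mem _ (⟨r, hr⟩ : R) (Submodule.subset_span hw)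

theorem prod_mem_pow_card {ι : Type*} {V : Submodule k A} {s : Finset ι} {f : ι → A}
    (hf : ∀ i ∈ s, f i ∈ V) : ∏ i ∈ s, f i ∈ V ^ s.card := by
  classical
  induction s using Finset.induction_on with
  | empty => exact ⟨1, by simp⟩
  | insert i s hi ih =>
    rw [Finset.prod_insert hi, Finset.card_insert_of_notMem hi, pow_succ']
    exact Submodule.mul_mem_mul (hf i (s.mem_insert_self i))
      (ih fun j hj => hf j (Finset.mem_insert_of_mem hj))

theorem iSup_pow_eq_top {V : Submodule k A} (hV : Algebra.adjoin k (V : Set A) = ⊤) :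
    ⨆ n : ℕ, V ^ n = ⊤ := by
  rw [← top_le_iff, ← Algebra.top_toSubmodule, ← hV, Algebra.adjoin_eq_span, Submodule.span_le]
  intro a ha
  obtain ⟨n, hn⟩ : ∃ n : ℕ, a ∈ V ^ n := by
    induction ha using Submonoid.closure_induction with
    | mem x hx => exact ⟨1, by rwa [pow_one]⟩
    | one => exact ⟨0, by rw [pow_zero]; exact Submodule.one_le.1 le_rfl⟩
    | mul x y _ _ hx hy =>
      obtain ⟨m, hm⟩ := hx
      obtain ⟨n, hn⟩ := hy
      exact ⟨m + n, pow_add V m n ▸ Submodule.mul_mem_mul hm hn⟩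
  exact Submodule.mem_iSup_of_mem n hn

theorem exists_fg_mul_range_eq_top {B : Type*} [CommRing B] [Algebra k B] {g : B →ₐ[k] A}
    (hg : g.Finite) :
    ∃ W : Submodule k A, W.FG ∧ 1 ≤ W ∧ W * Subalgebra.toSubmodule g.range = ⊤ := by
  have hfin : Module.Finite g.range A :=
    AlgHom.Finite.of_comp_finite (f := g.rangeRestrict) (g := g.range.val) hg
  obtain ⟨S, hS⟩ := hfin.fg_top
  refine ⟨Submodule.span k (insert 1 S), Submodule.fg_span (S.finite_toSet.insert 1),
    Submodule.one_le.2 (Submodule.subset_span (Set.mem_insert _ _)), ?_⟩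
  rw [← restrictScalars_span_eq_mul_toSubmodule, Submodule.restrictScalars_eq_top_iff, ← top_le_iff,
    ← hS]
  exact Submodule.span_mono ((Set.subset_insert _ _).trans Submodule.subset_span)

theorem exists_pow_le_mul_of_mul_iSup_eq_top {B : ℕ → Submodule k A} (hB : Monotone B)
    (hB1 : 1 ≤ B 0) (hBmul : ∀ m n, B m * B n ≤ B (m + n)) {V W : Submodule k A} (hV : V.FG)
    (hW : W.FG) (hW1 : 1 ≤ W) (hWB : W * ⨆ n, B n = ⊤) : ∃ D, ∀ m, V ^ m ≤ W * B (D * m) := by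
  obtain ⟨D, hD⟩ := exists_le_of_fg_of_le_iSup (B := fun n => W * B n)
    (fun m n h => mul_le_mul' le_rfl (hB h)) (hV.mul hW) (by
      rw [← Submodule.mul_iSup, hWB]; exact le_top)
  have hVW (m : ℕ) : V ^ m * W ≤ W * B (D * m) := by
    induction m with
    | zero => simpa using mul_le_mul_right hB1 W
    | succ m ih =>
      calc V ^ (m + 1) * W = V * (V ^ m * W) := by ring
        _ ≤ V * (W * B (D * m)) := by gcongr
        _ = V * W * B (D * m) := by ring
        _ ≤ W * B D * B (D * m) := by gcongr
        _ = W * (B D * B (D * m)) := by ring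
        _ ≤ W * B (D * (m + 1)) := by
          gcongr
          exact (hBmul _ _).trans_eq (by ring_nf)
  have hV1 (m : ℕ) : V ^ m ≤ V ^ m * W := by simpa using mul_le_mul_right hW1 (V ^ m)
  exact ⟨D, fun m => (hV1 m).trans (hVW m)⟩

end Filtration

section RestrictDegree

open MvPolynomial

variable {k : Type*} [Field k]

theorem finrank_restrictDegree (d n : ℕ) :
    Module.finrank k (restrictDegree (Fin d) k n) = (n + 1) ^ d := by
  have e : {s : Fin d →₀ ℕ | ∀ i, s i ≤ n} ≃ (Fin d → Fin (n + 1)) :=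
    { toFun := fun s i => ⟨s.1 i, Nat.lt_succ_of_le (s.2 i)⟩
      invFun := fun f => ⟨Finsupp.equivFunOnFinite.symm fun i => (f i : ℕ), fun i => by
        simpa using Nat.le_of_lt_succ (f i).2⟩
      left_inv := fun s => by ext; simp
      right_inv := fun f => by ext; simp }
  rw [restrictDegree, Module.finrank_eq_nat_card_basis (basisRestrictSupport k _), Nat.card_congr e]
  simp

theorem restrictDegree_mono {σ : Type*} : Monotone fun n => restrictDegree σ k n :=
  fun _ _ hmn => restrictSupport_mono _ fun _ hs i => (hs i).trans hmn

theorem restrictDegree_mul_le {σ : Type*} (m n : ℕ) :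
    restrictDegree σ k m * restrictDegree σ k n ≤ restrictDegree σ k (m + n) := by
  simp only [restrictDegree, ← restrictSupport_add]
  refine restrictSupport_mono _ ?_
  rintro _ ⟨s, hs, t, ht, rfl⟩ i
  exact add_le_add (hs i) (ht i)

theorem one_le_restrictDegree {σ : Type*} (n : ℕ) : 1 ≤ restrictDegree σ k n := by
  rw [Submodule.one_le, ← C_1, C_apply]
  exact (monomial_mem_restrictSupport (R := k)).2 (Or.inl fun _ => by simp)

theorem iSup_restrictDegree {σ : Type*} : ⨆ n, restrictDegree σ k n = ⊤ :=
  top_le_iff.1 fun p _ => Submodule.mem_iSup_of_mem p.totalDegree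
    (restrictTotalDegree_le_restrictDegree _ _ _ ((mem_restrictTotalDegree _ _ _).2 le_rfl))

theorem map_restrictDegree_le {A : Type*} [CommRing A] [Algebra k A] {d t : ℕ}
    {V : Submodule k A} (hV : 1 ≤ V) (g : MvPolynomial (Fin d) k →ₐ[k] A)
    (hg : ∀ i, g (X i) ∈ V ^ t) (n : ℕ) :
    (restrictDegree (Fin d) k n).map g.toLinearMap ≤ V ^ (t * d * n) := by
  rw [restrictDegree, restrictSupport_eq_span, Submodule.map_span, Submodule.span_le]
  rintro _ ⟨_, ⟨e, he, rfl⟩, rfl⟩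
  have hpow (i : Fin d) : g (X i) ^ e i ∈ V ^ (t * n) := by
    refine pow_le_pow_right₀ hV (Nat.mul_le_mul_left t (he i)) ?_
    rw [pow_mul]
    exact Submodule.pow_mem_pow _ (hg i) _
  have hmonomial : g (monomial e 1) = ∏ i, g (X i) ^ e i := by
    rw [monomial_eq, Finsupp.prod_fintype _ _ (by simp)]
    simp
  change g (monomial e 1) ∈ _
  rw [hmonomial, mul_right_comm, pow_mul]
  simpa using prod_mem_pow_card (s := Finset.univ) fun i _ => hpow i

end RestrictDegree

section Growth

variable {k A : Type*} [Field k] [CommRing A] [Algebra k A]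

/-- A *frame* of the algebra `A`, as in the theory of growth: a finite-dimensional subspace that
contains `1` and generates `A`. Its powers form an exhaustive filtration of `A`. -/
structure IsFrame (V : Submodule k A) : Prop where
  fg : V.FG
  one_le : 1 ≤ V
  adjoin_eq_top : Algebra.adjoin k (V : Set A) = ⊤

/-- The growth function of a subspace `V`, which sends `m` to `dim V ^ m`. For a frame it
grows like `m ^ d`, where `d` is the dimension of `A`. -/
noncomputable def growth (V : Submodule k A) (m : ℕ) : ℕ :=
  Module.finrank k ↥(V ^ m)

variable {V : Submodule k A}

namespace IsFrame

theorem pow_mono (hV : IsFrame V) : Monotone fun n : ℕ => V ^ n :=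
  pow_right_mono₀ hV.one_le

theorem finite_pow (hV : IsFrame V) (m : ℕ) : Module.Finite k ↥(V ^ m) :=
  Module.Finite.iff_fg.2 (hV.fg.pow m)

theorem exists_le_pow (hV : IsFrame V) {W : Submodule k A} (hW : W.FG) : ∃ n, W ≤ V ^ n :=
  exists_le_of_fg_of_le_iSup hV.pow_mono hW (by rw [iSup_pow_eq_top hV.adjoin_eq_top]; exact le_top)

theorem growth_mono (hV : IsFrame V) : Monotone (growth V) := fun _ n hmn =>
  have := hV.finite_pow n
  Submodule.finrank_mono (hV.pow_mono hmn)

theorem growth_pos [Nontrivial A] (hV : IsFrame V) (m : ℕ) : 0 < growth V m := by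
  have := hV.finite_pow m
  refine Nat.pos_of_ne_zero fun h => one_ne_zero (α := Submodule k A) ?_
  rw [growth, Submodule.finrank_eq_zero] at h
  exact le_bot_iff.1 (h ▸ one_le_pow₀ hV.one_le)

theorem exists_growth_le (hV : IsFrame V) {d : ℕ} {g : MvPolynomial (Fin d) k →ₐ[k] A}
    (hg : g.Finite) : ∃ C D : ℕ, ∀ m, growth V m ≤ C * (D * m + 1) ^ d := by
  let B n := (MvPolynomial.restrictDegree (Fin d) k n).map g.toLinearMap
  have hBfg (n : ℕ) : (B n).FG := (Module.Finite.iff_fg.1 (inferInstance :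
    Module.Finite k (MvPolynomial.restrictDegree (Fin d) k n))).map _
  have hBrank (n : ℕ) : Module.finrank k (B n) ≤ (n + 1) ^ d :=
    (Submodule.finrank_map_le _ _).trans_eq (finrank_restrictDegree d n)
  have hBsup : ⨆ n, B n = Subalgebra.toSubmodule g.range := by
    rw [← Submodule.map_iSup, iSup_restrictDegree, Submodule.map_top]
    rfl
  obtain ⟨W, hW, hW1, hWg⟩ := exists_fg_mul_range_eq_top hg
  obtain ⟨D, hD⟩ := exists_pow_le_mul_of_mul_iSup_eq_top (B := B)
    (fun m n h => Submodule.map_mono (restrictDegree_mono h))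
    ((Submodule.map_one g).symm.trans_le (Submodule.map_mono (one_le_restrictDegree 0)))
    (fun m n => by
      rw [← Submodule.map_mul]
      exact Submodule.map_mono (restrictDegree_mul_le m n))
    hV.fg hW hW1 (hBsup ▸ hWg)
  refine ⟨Module.finrank k W, D, fun m => ?_⟩
  have := Module.Finite.iff_fg.2 (hW.mul (hBfg (D * m)))
  calc growth V m ≤ Module.finrank k ↥(W * B (D * m)) := Submodule.finrank_mono (hD m)
    _ ≤ Module.finrank k W * Module.finrank k (B (D * m)) := finrank_mul_le hW (hBfg _)
    _ ≤ _ := Nat.mul_le_mul_left _ (hBrank _)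

theorem exists_pow_le_growth (hV : IsFrame V) {d : ℕ} {g : MvPolynomial (Fin d) k →ₐ[k] A}
    (hg : Function.Injective g) : ∃ E : ℕ, ∀ m, m ^ d ≤ growth V (E * m) := by
  obtain ⟨t, ht⟩ := hV.exists_le_pow
    (Submodule.fg_span (R := k) (Set.finite_range fun i => g (MvPolynomial.X i)))
  refine ⟨t * d, fun m => ?_⟩
  have := hV.finite_pow (t * d * m)
  calc m ^ d ≤ (m + 1) ^ d := Nat.pow_le_pow_left m.le_succ d
    _ = Module.finrank k (MvPolynomial.restrictDegree (Fin d) k m) :=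
      (finrank_restrictDegree d m).symm
    _ = Module.finrank k ((MvPolynomial.restrictDegree (Fin d) k m).map g.toLinearMap) :=
      (Submodule.equivMapOfInjective g.toLinearMap hg _).finrank_eq
    _ ≤ growth V (t * d * m) := Submodule.finrank_mono
      (map_restrictDegree_le hV.one_le g (fun i => ht (Submodule.subset_span ⟨i, rfl⟩)) m)

end IsFrame

end Growth

section NaturalSequences

theorem le_of_forall_pow_le_mul_pow {a b M : ℕ} (h : ∀ j, a ^ j ≤ M * b ^ j) : a ≤ b := by
  by_contra! hlt
  rcases Nat.eq_zero_or_pos b with rfl | hb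
  · exact absurd (h 1) (by simpa using hlt.ne')
  have hb' : (0 : ℝ) < b := by exact_mod_cast hb
  have hratio : (1 : ℝ) < a / b := by rw [one_lt_div hb']; exact_mod_cast hlt
  obtain ⟨n, hn⟩ := pow_unbounded_of_one_lt (M : ℝ) hratio
  rw [div_pow, lt_div_iff₀ (by positivity)] at hn
  exact (h n).not_gt (by exact_mod_cast hn)

theorem le_pow_of_mul_le_of_le_pow {h : ℕ → ℕ} (h_pos : 0 < h 0) {N p s : ℕ} (hp : 2 ≤ p)
    (hmul : ∀ m, N * h m ≤ h (p * m + s)) {C D d : ℕ} (hpow : ∀ m, h m ≤ C * (D * m + 1) ^ d) :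
    N ≤ p ^ d := by
  have hiter (j : ℕ) : ∃ m, m + s ≤ s * p ^ j ∧ N ^ j ≤ h m := by
    induction j with
    | zero => exact ⟨0, by simp, (pow_zero N).trans_le h_pos⟩
    | succ j ih =>
      obtain ⟨m, hm, hN⟩ := ih
      refine ⟨p * m + s, ?_, ?_⟩
      · calc p * m + s + s = p * m + 2 * s := by ring
          _ ≤ p * m + p * s := by gcongr
          _ = p * (m + s) := by ring
          _ ≤ p * (s * p ^ j) := by gcongr
          _ = s * p ^ (j + 1) := by ring
      · calc N ^ (j + 1) = N * N ^ j := pow_succ' N j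
          _ ≤ N * h m := by gcongr
          _ ≤ h (p * m + s) := hmul m
  refine le_of_forall_pow_le_mul_pow (M := C * (D * s + 1) ^ d) fun j => ?_
  obtain ⟨m, hm, hN⟩ := hiter j
  have hpj : 1 ≤ p ^ j := Nat.one_le_pow _ _ (by omega)
  calc N ^ j ≤ h m := hN
    _ ≤ C * (D * m + 1) ^ d := hpow m
    _ ≤ C * (D * (s * p ^ j) + p ^ j) ^ d := by gcongr; omega
    _ = C * (D * s + 1) ^ d * (p ^ d) ^ j := by
      rw [← pow_mul, mul_comm d j, pow_mul, mul_assoc, ← mul_pow]; ring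

theorem pow_le_of_le_mul_of_pow_le {h : ℕ → ℕ} (h_mono : Monotone h) {N p c s : ℕ} (hp : 2 ≤ p)
    (hmul : ∀ j, h (c + p * j) ≤ N * h (s + j)) {E d : ℕ} (hpow : ∀ m, m ^ d ≤ h (E * m)) :
    p ^ d ≤ N := by
  have hiter (i : ℕ) : h (E * p ^ i + 2 * s) ≤ N ^ i * h (E + 2 * s) := by
    induction i with
    | zero => simp
    | succ i ih =>
      have hle : E * p ^ (i + 1) + 2 * s ≤ c + p * (E * p ^ i + s) :=
        calc E * p ^ (i + 1) + 2 * s ≤ E * p ^ (i + 1) + p * s := by gcongr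
          _ = p * (E * p ^ i + s) := by ring
          _ ≤ c + p * (E * p ^ i + s) := Nat.le_add_left _ _
      calc h (E * p ^ (i + 1) + 2 * s) ≤ h (c + p * (E * p ^ i + s)) := h_mono hle
        _ ≤ N * h (s + (E * p ^ i + s)) := hmul _
        _ = N * h (E * p ^ i + 2 * s) := by congr 2; ring
        _ ≤ N * (N ^ i * h (E + 2 * s)) := by gcongr
        _ = N ^ (i + 1) * h (E + 2 * s) := by ring
  refine le_of_forall_pow_le_mul_pow (M := h (E + 2 * s)) fun i => ?_
  calc (p ^ d) ^ i = (p ^ i) ^ d := by rw [← pow_mul, ← pow_mul, mul_comm]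
    _ ≤ h (E * p ^ i) := hpow _
    _ ≤ h (E * p ^ i + 2 * s) := h_mono (Nat.le_add_right _ _)
    _ ≤ h (E + 2 * s) * N ^ i := (hiter i).trans_eq (mul_comm _ _)

end NaturalSequences

section Endomorphism

variable {k A : Type*} [Field k] [CommRing A] [Algebra k A] {V : Submodule k A}

-- Pigeonhole: a long product of generators of `V` contains some generator at least `p + 1` times.
theorem exists_pow_le_pow_mul_of_forall_pow_mem (hV : V.FG) {U : Submodule k A} {p : ℕ}
    (hU : ∀ v ∈ V, v ^ (p + 1) ∈ U) : ∃ c, ∀ n, V ^ (c + n + (p + 1)) ≤ V ^ (c + n) * U := by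
  classical
  obtain ⟨S, rfl⟩ := hV
  refine ⟨S.card * p, fun n => ?_⟩
  nth_rw 1 [Submodule.span_pow]
  rw [Submodule.span_le]
  intro x hx
  obtain ⟨f, hf, rfl⟩ := Set.mem_pow_iff_prod.1 hx
  obtain ⟨y, hy⟩ := Fintype.exists_lt_card_fiber_of_mul_lt_card
    (fun i => (⟨f i, hf i⟩ : S)) (n := p)
    (by simp only [Fintype.card_coe, Fintype.card_fin]; omega)
  set T : Finset _ := {i | (⟨f i, hf i⟩ : S) = y}
  obtain ⟨r, hr⟩ := Nat.exists_eq_add_of_lt hy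
  have hyV : (y : A) ∈ Submodule.span k (S : Set A) := Submodule.subset_span y.2
  have hprod : ∏ i ∈ T, f i = (y : A) ^ T.card :=
    Finset.prod_eq_pow_card fun i hi => congrArg Subtype.val (Finset.mem_filter.1 hi).2
  have hcard : S.card * p + n = r + Tᶜ.card := by
    have := T.card_add_card_compl
    rw [Fintype.card_fin] at this
    omega
  have hsplit : ∏ i, f i = y ^ r * (∏ i ∈ Tᶜ, f i) * y ^ (p + 1) := by
    rw [← Finset.prod_mul_prod_compl T f, hprod, hr]
    ring
  have hcompl : ∏ i ∈ Tᶜ, f i ∈ Submodule.span k (S : Set A) ^ Tᶜ.card :=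
    prod_mem_pow_card fun i _ => Submodule.subset_span (hf i)
  change ∏ i, f i ∈ _
  rw [hsplit, congrArg (Submodule.span k (S : Set A) ^ ·) hcard, pow_add]
  exact Submodule.mul_mem_mul (Submodule.mul_mem_mul (Submodule.pow_mem_pow _ hyV _) hcompl)
    (hU _ hyV)

theorem exists_pow_le_mul_map_pow (hV : V.FG) {L : A →ₐ[k] A} {p : ℕ}
    (hL : ∀ v ∈ V, v ^ (p + 1) ∈ V * V.map L.toLinearMap) :
    ∃ c, ∀ j, V ^ (c + p * j) ≤ V ^ c * (V ^ j).map L.toLinearMap := by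
  obtain ⟨c, hc⟩ := exists_pow_le_pow_mul_of_forall_pow_mem hV hL
  refine ⟨c + 1, fun j => ?_⟩
  induction j with
  | zero => simp [Submodule.map_one]
  | succ j ih =>
    calc V ^ (c + 1 + p * (j + 1)) = V ^ (c + p * j + (p + 1)) := by ring
      _ ≤ V ^ (c + p * j) * (V * V.map L.toLinearMap) := hc _
      _ = V ^ (c + 1 + p * j) * V.map L.toLinearMap := by ring
      _ ≤ V ^ (c + 1) * (V ^ j).map L.toLinearMap * V.map L.toLinearMap := by gcongr
      _ = V ^ (c + 1) * (V ^ (j + 1)).map L.toLinearMap := by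
        rw [pow_succ V j, Submodule.map_mul, mul_assoc]

theorem finite_of_mul_toSubmodule_eq_top {R : Subalgebra k A} {W : Submodule k A} (hW : W.FG)
    (h : W * Subalgebra.toSubmodule R = ⊤) : Module.Finite R A := by
  obtain ⟨T, rfl⟩ := hW
  refine ⟨⟨T, (Submodule.restrictScalars_eq_top_iff k R A).1 ?_⟩⟩
  rw [← h, ← restrictScalars_span_eq_mul_toSubmodule, Submodule.span_span_of_tower]

namespace IsFrame

variable {L : A →ₐ[k] A} {p : ℕ}

theorem iSup_map_pow (hV : IsFrame V) (L : A →ₐ[k] A) :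
    ⨆ n : ℕ, (V ^ n).map L.toLinearMap = Subalgebra.toSubmodule L.range := by
  rw [← Submodule.map_iSup, iSup_pow_eq_top hV.adjoin_eq_top, Submodule.map_top]
  rfl

theorem finite_range (hV : IsFrame V) (hp : 1 ≤ p) {c : ℕ}
    (hc : ∀ j, V ^ (c + p * j) ≤ V ^ c * (V ^ j).map L.toLinearMap) : Module.Finite L.range A := by
  refine finite_of_mul_toSubmodule_eq_top (hV.fg.pow c) (top_le_iff.1 ?_)
  rw [← iSup_pow_eq_top hV.adjoin_eq_top, ← hV.iSup_map_pow L, Submodule.mul_iSup]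
  refine iSup_mono fun j => (hV.pow_mono ?_).trans (hc j)
  exact (Nat.le_mul_of_pos_left j hp).trans (Nat.le_add_left _ c)

theorem exists_card_mul_growth_le (hV : IsFrame V) (hL : Function.Injective L)
    (hLV : V.map L.toLinearMap ≤ V ^ p) {ι : Type*} [Fintype ι] {b : ι → A}
    (hb : LinearIndependent L.range b) :
    ∃ s, ∀ m, Fintype.card ι * growth V m ≤ growth V (p * m + s) := by
  have (m : ℕ) : Module.Finite k ↥(V ^ m) := hV.finite_pow m
  obtain ⟨s, hs⟩ := hV.exists_le_pow (Submodule.fg_span (R := k) (Set.finite_range b))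
  refine ⟨s, fun m => ?_⟩
  let combo : (ι → ↥(V ^ m)) →ₗ[k] A := ∑ i,
    LinearMap.mulRight k (b i) ∘ₗ L.toLinearMap ∘ₗ (V ^ m).subtype ∘ₗ LinearMap.proj i
  have hcombo (f : ι → ↥(V ^ m)) : combo f = ∑ i, L (f i) * b i := by
    simp [combo]
  have hmem (f : ι → ↥(V ^ m)) : combo f ∈ V ^ (p * m + s) := by
    rw [hcombo, pow_add, pow_mul]
    refine Submodule.sum_mem _ fun i _ =>
      Submodule.mul_mem_mul (pow_le_pow_left' hLV m ?_) (hs (Submodule.subset_span ⟨i, rfl⟩))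
    rw [← Submodule.map_pow]
    exact Submodule.mem_map_of_mem (f := L.toLinearMap) (f i).2
  have hinj : Function.Injective (combo.codRestrict _ hmem) := by
    rw [← LinearMap.ker_eq_bot, LinearMap.ker_codRestrict, LinearMap.ker_eq_bot']
    intro f hf
    have hLf := Fintype.linearIndependent_iff.1 hb (fun i => ⟨L (f i), f i, rfl⟩)
      ((hcombo f).symm.trans hf)
    exact funext fun i => Subtype.ext
      ((map_eq_zero_iff L hL).1 (congrArg Subtype.val (hLf i)))
  simpa [growth, Module.finrank_pi_fintype] using LinearMap.finrank_le_finrank_of_injective hinj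

theorem exists_growth_le_mul [IsDomain A] (hV : IsFrame V) {c : ℕ}
    (hc : ∀ j, V ^ (c + p * j) ≤ V ^ c * (V ^ j).map L.toLinearMap) {W : Submodule k A}
    (hW : W.FG) {h : A} (h0 : h ≠ 0)
    (hhW : ∀ a, h * a ∈ W * Subalgebra.toSubmodule L.range) :
    ∃ s, ∀ j, growth V (c + p * j) ≤ Module.finrank k W * growth V (s + j) := by
  let B (s : ℕ) : Submodule k A := W * (V ^ s).map L.toLinearMap
  have hLfg (m : ℕ) : ((V ^ m).map L.toLinearMap).FG := (hV.fg.pow m).map _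
  obtain ⟨s, hs⟩ := exists_le_of_fg_of_le_iSup (B := B)
    (fun s t hst => mul_le_mul' le_rfl (Submodule.map_mono (hV.pow_mono hst)))
    ((hV.fg.pow c).map (LinearMap.mulLeft k h)) (by
      rw [← Submodule.mul_iSup, hV.iSup_map_pow, Submodule.map_le_iff_le_comap]
      exact fun a _ => hhW a)
  refine ⟨s, fun j => ?_⟩
  have hle : (V ^ (c + p * j)).map (LinearMap.mulLeft k h) ≤ B (s + j) := by
    rw [Submodule.map_le_iff_le_comap]
    refine (hc j).trans (Submodule.mul_le.2 fun v hv u hu => ?_)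
    change h * (v * u) ∈ W * _
    rw [pow_add, Submodule.map_mul, ← mul_assoc, ← mul_assoc]
    exact Submodule.mul_mem_mul (hs (Submodule.mem_map_of_mem hv)) hu
  have := Module.Finite.iff_fg.2 (hW.mul (hLfg (s + j)))
  have := hV.finite_pow (s + j)
  calc growth V (c + p * j)
      = Module.finrank k ↥((V ^ (c + p * j)).map (LinearMap.mulLeft k h)) :=
        (Submodule.equivMapOfInjective _ (mul_right_injective₀ h0) _).finrank_eq
    _ ≤ Module.finrank k (B (s + j)) := Submodule.finrank_mono hle
    _ ≤ Module.finrank k W * Module.finrank k ↥((V ^ (s + j)).map L.toLinearMap) :=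
        finrank_mul_le hW (hLfg _)
    _ ≤ Module.finrank k W * growth V (s + j) :=
        Nat.mul_le_mul_left _ (Submodule.finrank_map_le _ _)

theorem card_le_pow_of_linearIndependent [Algebra.FiniteType k A] (hV : IsFrame V) {d : ℕ}
    (hdim : ringKrullDim A = d) (hp : 2 ≤ p) (hL : Function.Injective L)
    (hLV : V.map L.toLinearMap ≤ V ^ p) {ι : Type*} [Fintype ι] {b : ι → A}
    (hb : LinearIndependent L.range b) : Fintype.card ι ≤ p ^ d := by
  have := nontrivial_of_ringKrullDim_eq_natCast hdim
  obtain ⟨g, -, hg⟩ := exists_finite_inj_algHom_of_ringKrullDim_eq (k := k) hdim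
  obtain ⟨C, D, hCD⟩ := hV.exists_growth_le hg
  obtain ⟨s, hs⟩ := hV.exists_card_mul_growth_le hL hLV hb
  exact le_pow_of_mul_le_of_le_pow (hV.growth_pos 0) hp hs hCD

theorem pow_le_finrank_of_forall_mul_mem [IsDomain A] [Algebra.FiniteType k A] (hV : IsFrame V)
    {d : ℕ} (hdim : ringKrullDim A = d) (hp : 2 ≤ p) {c : ℕ}
    (hc : ∀ j, V ^ (c + p * j) ≤ V ^ c * (V ^ j).map L.toLinearMap) {W : Submodule k A}
    (hW : W.FG) {h : A} (h0 : h ≠ 0)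
    (hhW : ∀ a, h * a ∈ W * Subalgebra.toSubmodule L.range) : p ^ d ≤ Module.finrank k W := by
  obtain ⟨g, hg, -⟩ := exists_finite_inj_algHom_of_ringKrullDim_eq (k := k) hdim
  obtain ⟨E, hE⟩ := hV.exists_pow_le_growth hg
  obtain ⟨s, hs⟩ := hV.exists_growth_le_mul hc hW h0 hhW
  exact pow_le_of_le_mul_of_pow_le hV.growth_mono hp hs hE

end IsFrame

end Endomorphism

section Rank

open scoped TensorProduct nonZeroDivisors

theorem card_le_finrank_of_injective_algHom {R A B : Type*} [CommRing R] [IsDomain R] [CommRing A]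
    [Algebra R A] [Module.Finite R A] [CommRing B] [IsDomain B] [Algebra R B] [FaithfulSMul R B]
    {Γ : Type*} {τ : Γ → A →ₐ[R] B} (hτ : Function.Injective τ) :
    Nat.card Γ ≤ Module.finrank R A := by
  let K := FractionRing R
  let F := FractionRing B
  let := FractionRing.liftAlgebra R F
  let σ (x : Γ) : K ⊗[R] A →ₐ[K] F := AlgHom.liftEquiv R K A F ((Algebra.algHom R B F).comp (τ x))
  have hσ : Function.Injective σ := fun x y h => hτ <| AlgHom.ext fun a =>
    IsFractionRing.injective B F (DFunLike.congr_fun ((AlgHom.liftEquiv R K A F).injective h) a)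
  calc Nat.card Γ ≤ Nat.card (K ⊗[R] A →ₐ[K] F) := Nat.card_le_card_of_injective σ hσ
    _ ≤ Module.finrank K (K ⊗[R] A) := card_algHom_le_finrank K (K ⊗[R] A) F
    _ = Module.finrank R A := (TensorProduct.isBaseChange R A K).finrank_eq

theorem exists_linearIndependent_range_of_comp_eq {k A : Type*} [Field k] [CommRing A] [IsDomain A]
    [Algebra k A] {L : A →ₐ[k] A} [Module.Finite L.range A] {Γ : Type*} {τ : Γ → A →ₐ[k] A}
    (hτ : Function.Injective τ) (hτL : ∀ x, (τ x).comp L = L) :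
    ∃ b : Fin (Nat.card Γ) → A, LinearIndependent L.range b := by
  let σ (x : Γ) : A →ₐ[L.range] A :=
    { τ x with commutes' := by rintro ⟨_, a, rfl⟩; exact DFunLike.congr_fun (hτL x) a }
  have hσ : Function.Injective σ := fun x y h =>
    hτ (AlgHom.ext fun a => DFunLike.congr_fun h a)
  exact exists_linearIndependent_of_le_finrank (card_le_finrank_of_injective_algHom hσ)

end Rank

section RationalPoints

theorem exists_algHom_apply_ne_zero {K A : Type*} [Field K] [CommRing A] [Algebra K A]
    [IsJacobsonRing A] [IsReduced A]
    (hK : ∀ m : Ideal A, m.IsMaximal → Function.Surjective (algebraMap K (A ⧸ m))) {f : A}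
    (hf : f ≠ 0) : ∃ x : A →ₐ[K] K, x f ≠ 0 := by
  obtain ⟨m, hm, hfm⟩ : ∃ m : Ideal A, m.IsMaximal ∧ f ∉ m := by
    by_contra! h
    have hjac : f ∈ (⊥ : Ideal A).jacobson := Ideal.mem_sInf.2 fun {I} hI => h I hI.2
    rw [IsJacobsonRing.out ‹_› Ideal.isRadical_bot] at hjac
    exact hf hjac
  let e := AlgEquiv.ofBijective (Algebra.ofId K (A ⧸ m)) ⟨(algebraMap K (A ⧸ m)).injective, hK m hm⟩
  refine ⟨(e.symm : (A ⧸ m) →ₐ[K] K).comp (Ideal.Quotient.mkₐ K m), ?_⟩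
  simpa [Ideal.Quotient.eq_zero_iff_mem] using hfm

theorem finite_algHom_of_finiteType (k A : Type*) [Field k] [Finite k] [CommRing A] [Algebra k A]
    [Algebra.FiniteType k A] : Finite (A →ₐ[k] k) := by
  obtain ⟨S, hS⟩ := (‹Algebra.FiniteType k A›).out
  exact Finite.of_injective (fun (g : A →ₐ[k] k) (s : S) => g s) fun g g' h =>
    AlgHom.ext_of_adjoin_eq_top hS fun s hs => congrFun h ⟨s, hs⟩

variable {k : Type*} [Field k] [Fintype k]

theorem mem_range_algebraMap_of_pow_card_eq {F : Type*} [Field F] [Algebra k F] {y : F}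
    (hy : y ^ Fintype.card k = y) : y ∈ (algebraMap k F).range := by
  have hsplits := (FiniteField.isSplittingField_sub k k).splits
  rw [Algebra.algebraMap_self, Polynomial.map_id] at hsplits
  exact hsplits.mem_range_of_isRoot (FiniteField.X_pow_card_sub_X_ne_zero k Fintype.one_lt_card)
    (by simp [hy])

variable {B : Type*} [CommRing B] [Algebra k B]

theorem exists_algHom_apply_ne_zero_of_pow_card_eq [Algebra.FiniteType k B]
    (hB : ∀ x : B, x ^ Fintype.card k = x) {b : B} (hb : b ≠ 0) : ∃ x : B →ₐ[k] k, x b ≠ 0 := by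
  have : IsReduced B := (isReduced_iff_pow_one_lt _ Fintype.one_lt_card).2 fun x hx => hB x ▸ hx
  have : IsJacobsonRing B := isJacobsonRing_of_finiteType (A := k)
  refine exists_algHom_apply_ne_zero (fun m hm y => ?_) hb
  let := Ideal.Quotient.field m
  refine mem_range_algebraMap_of_pow_card_eq ?_
  obtain ⟨b, rfl⟩ := Ideal.Quotient.mk_surjective y
  rw [← map_pow, hB]

theorem finite_and_finrank_le_card_algHom_of_pow_card_eq [Algebra.FiniteType k B]
    (hB : ∀ x : B, x ^ Fintype.card k = x) :
    Module.Finite k B ∧ Module.finrank k B ≤ Nat.card (B →ₐ[k] k) := by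
  have := finite_algHom_of_finiteType k B
  have := Fintype.ofFinite (B →ₐ[k] k)
  let eval : B →ₗ[k] ((B →ₐ[k] k) → k) := LinearMap.pi fun x => x.toLinearMap
  have heval : Function.Injective eval := by
    rw [injective_iff_map_eq_zero]
    intro b hb
    by_contra hne
    obtain ⟨x, hx⟩ := exists_algHom_apply_ne_zero_of_pow_card_eq hB hne
    exact hx (congrFun hb x)
  refine ⟨Module.Finite.of_injective eval heval, ?_⟩
  simpa using LinearMap.finrank_le_finrank_of_injective heval

end RationalPoints

section Nakayama

theorem exists_smul_top_le_span_of_quotient {R A : Type*} [CommRing R] [CommRing A] [Algebra R A]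
    [Module.Finite R A] {m : Ideal R} {W : Submodule R A}
    (hW : W ⊔ (m.map (algebraMap R A)).restrictScalars R = ⊤) :
    ∃ r : R, r - 1 ∈ m ∧ ∀ a : A, r • a ∈ W := by
  obtain ⟨r, hr, hle⟩ := Submodule.exists_sub_one_mem_and_smul_le_of_fg_of_le_sup (I := m)
    (N := W) (N' := ⊤) (P := ⊤) Module.Finite.fg_top le_top (by rw [Ideal.smul_top_eq_map, hW])
  exact ⟨r, hr, fun a => hle (Submodule.smul_mem_pointwise_smul a r ⊤ trivial)⟩

end Nakayama

section Points

open WithConv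

variable {R A B C : Type*} [CommSemiring R] [CommSemiring A] [Algebra R A] [CommSemiring B]
  [Algebra R B] [Semiring C] [Bialgebra R C]

/-- The map on points `G(A) → G(B)` induced by `h : A →ₐ[R] B`, where `G` is the affine monoid
scheme `Spec C`; it encodes the functoriality of the convolution product. -/
noncomputable def mapPoints (h : A →ₐ[R] B) : WithConv (C →ₐ[R] A) →* WithConv (C →ₐ[R] B) where
  toFun f := toConv (h.comp f.ofConv)
  map_one' := by
    ext c
    simp
  map_mul' f g := by rw [AlgHom.comp_convMul_distrib]

theorem mapPoints_ofId (h : A →ₐ[R] B) (g : WithConv (C →ₐ[R] R)) :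
    mapPoints h (mapPoints (Algebra.ofId R A) g) = mapPoints (Algebra.ofId R B) g := by
  ext a
  simp [mapPoints, Algebra.ofId_apply]

theorem ker_le_of_mapPoints_eq_mk {R C D : Type*} [CommRing R] [CommRing C] [Bialgebra R C]
    [CommRing D] [Algebra R D] {I : Ideal C} {φ : WithConv (C →ₐ[R] D)} {e : D →ₐ[R] C ⧸ I}
    (he : mapPoints e φ = toConv (Ideal.Quotient.mkₐ R I)) : RingHom.ker φ.ofConv ≤ I := by
  intro a ha
  have hea : e (φ.ofConv a) = Ideal.Quotient.mk I a := congrArg (fun ψ => ψ.ofConv a) he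
  rw [← Ideal.Quotient.eq_zero_iff_mem, ← hea, RingHom.mem_ker.1 ha, map_zero]

end Points

section AlgebraicallyClosed

open scoped TensorProduct
open WithConv

variable {K : Type*} [Field K] [IsAlgClosed K]

theorem exists_algHom_apply_ne_zero_of_isAlgClosed {A : Type*} [CommRing A] [Algebra K A]
    [Algebra.FiniteType K A] [IsReduced A] {f : A} (hf : f ≠ 0) : ∃ x : A →ₐ[K] K, x f ≠ 0 := by
  have : IsJacobsonRing A := isJacobsonRing_of_finiteType (A := K)
  refine exists_algHom_apply_ne_zero (fun m hm => ?_) hf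
  let := Ideal.Quotient.field m
  have : Module.Finite K (A ⧸ m) := finite_of_finite_type_of_isJacobsonRing K (A ⧸ m)
  exact IsAlgClosed.algebraMap_bijective_of_isIntegral.2

theorem isDomain_tensorProduct_of_isAlgClosed {A B : Type*} [CommRing A] [IsDomain A] [Algebra K A]
    [Algebra.FiniteType K A] [CommRing B] [IsDomain B] [Algebra K B] : IsDomain (A ⊗[K] B) := by
  let b := Module.Basis.ofVectorSpace K B
  let ev (x : A →ₐ[K] K) : A ⊗[K] B →ₐ[K] B :=
    Algebra.TensorProduct.lift ((Algebra.ofId K B).comp x) (AlgHom.id K B) fun _ _ => .all _ _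
  have hev (x : A →ₐ[K] K) (s : A ⊗[K] B) (i) :
      b.repr (ev x s) i = x ((Algebra.TensorProduct.basis A b).repr s i) := by
    induction s with
    | zero => simp
    | add s t hs ht => simp only [map_add, Finsupp.add_apply, hs, ht]
    | tmul a c => simp [ev, Algebra.ofId_apply, ← Algebra.smul_def]
  have exists_coeff_ne_zero {s : A ⊗[K] B} (hs : s ≠ 0) :
      ∃ i, (Algebra.TensorProduct.basis A b).repr s i ≠ 0 := by
    contrapose! hs
    exact (Algebra.TensorProduct.basis A b).ext_elem (by simpa using hs)
  have ev_ne_zero {x : A →ₐ[K] K} {s : A ⊗[K] B} {i}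
      (h : x ((Algebra.TensorProduct.basis A b).repr s i) ≠ 0) : ev x s ≠ 0 := fun h0 =>
    h (by rw [← hev, h0, map_zero, Finsupp.zero_apply])
  have : NoZeroDivisors (A ⊗[K] B) := ⟨fun {s t} hst => by
    by_contra! h
    obtain ⟨i, hi⟩ := exists_coeff_ne_zero h.1
    obtain ⟨j, hj⟩ := exists_coeff_ne_zero h.2
    obtain ⟨x, hx⟩ := exists_algHom_apply_ne_zero_of_isAlgClosed (K := K) (mul_ne_zero hi hj)
    rw [map_mul] at hx
    apply mul_ne_zero (ev_ne_zero (left_ne_zero_of_mul hx)) (ev_ne_zero (right_ne_zero_of_mul hx))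
    rw [← map_mul, hst, map_zero]⟩
  exact NoZeroDivisors.to_isDomain _

end AlgebraicallyClosed

section MinimalPrimes

open scoped TensorProduct
open WithConv

variable {K : Type*} [Field K] [IsAlgClosed K] {H : Type*} [CommRing H] [HopfAlgebra K H]
  [Algebra.FiniteType K H]

/- In the group scheme `Spec H`, multiplication maps the irreducible `V(P) × g⁻¹ × V(Q)` onto a
set containing both `V(P)` (take the last factor to be `g`) and `V(Q)`. -/
theorem exists_isPrime_le_inf_of_le_ker {P Q : Ideal H} [P.IsPrime] [Q.IsPrime] {g : H →ₐ[K] K}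
    (hP : P ≤ RingHom.ker g) (hQ : Q ≤ RingHom.ker g) : ∃ J : Ideal H, J.IsPrime ∧ J ≤ P ⊓ Q := by
  let D := (H ⧸ P) ⊗[K] (H ⧸ Q)
  have : IsDomain D := isDomain_tensorProduct_of_isAlgClosed
  let x : WithConv (H →ₐ[K] D) :=
    toConv (Algebra.TensorProduct.includeLeft.comp (Ideal.Quotient.mkₐ K P))
  let y : WithConv (H →ₐ[K] D) :=
    toConv (Algebra.TensorProduct.includeRight.comp (Ideal.Quotient.mkₐ K Q))
  let φ := x * mapPoints (Algebra.ofId K D) (toConv g)⁻¹ * y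
  let evP : D →ₐ[K] H ⧸ Q := Algebra.TensorProduct.lift
    ((Algebra.ofId K _).comp (Ideal.Quotient.liftₐ P g hP)) (AlgHom.id K _) fun _ _ => .all _ _
  let evQ : D →ₐ[K] H ⧸ P := Algebra.TensorProduct.lift
    (AlgHom.id K _) ((Algebra.ofId K _).comp (Ideal.Quotient.liftₐ Q g hQ)) fun _ _ => .all _ _
  have hgP (a : H) : Ideal.Quotient.liftₐ P g hP (Ideal.Quotient.mk P a) = g a := rfl
  have hgQ (a : H) : Ideal.Quotient.liftₐ Q g hQ (Ideal.Quotient.mk Q a) = g a := rfl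
  have hevP : mapPoints evP φ = toConv (Ideal.Quotient.mkₐ K Q) := by
    have hx : mapPoints evP x = mapPoints (Algebra.ofId K _) (toConv g) := by
      ext a; simp [mapPoints, D, evP, x, hgP]
    have hy : mapPoints evP y = toConv (Ideal.Quotient.mkₐ K Q) := by
      ext a; simp [mapPoints, D, evP, y]
    rw [map_mul, map_mul, mapPoints_ofId, hx, hy, ← map_mul, mul_inv_cancel, map_one, one_mul]
  have hevQ : mapPoints evQ φ = toConv (Ideal.Quotient.mkₐ K P) := by
    have hx : mapPoints evQ x = toConv (Ideal.Quotient.mkₐ K P) := by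
      ext a; simp [mapPoints, D, evQ, x]
    have hy : mapPoints evQ y = mapPoints (Algebra.ofId K _) (toConv g) := by
      ext a; simp [mapPoints, D, evQ, y, hgQ]
    rw [map_mul, map_mul, mapPoints_ofId, hx, hy, mul_assoc, ← map_mul, inv_mul_cancel, map_one,
      mul_one]
  exact ⟨RingHom.ker φ.ofConv, RingHom.ker_isPrime _,
    le_inf (ker_le_of_mapPoints_eq_mk hevQ) (ker_le_of_mapPoints_eq_mk hevP)⟩

theorem eq_of_mem_minimalPrimes_of_le_ker {P Q : Ideal H} (hP : P ∈ minimalPrimes H)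
    (hQ : Q ∈ minimalPrimes H) {g : H →ₐ[K] K} (hPg : P ≤ RingHom.ker g)
    (hQg : Q ≤ RingHom.ker g) : P = Q := by
  have := hP.1.1
  have := hQ.1.1
  obtain ⟨J, hJ, hJPQ⟩ := exists_isPrime_le_inf_of_le_ker hPg hQg
  rw [le_inf_iff] at hJPQ
  rw [← hJPQ.1.antisymm (hP.2 ⟨hJ, bot_le⟩ hJPQ.1), hJPQ.2.antisymm (hQ.2 ⟨hJ, bot_le⟩ hJPQ.2)]

end MinimalPrimes

section Irreducible

open TopologicalSpace

theorem irreducibleSpace_of_eq_of_mem_irreducibleComponents {X : Type*} [TopologicalSpace X]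
    [NoetherianSpace X] [ConnectedSpace X]
    (h : ∀ Y ∈ irreducibleComponents X, ∀ Z ∈ irreducibleComponents X, ∀ x ∈ Y, x ∈ Z → Y = Z) :
    IrreducibleSpace X := by
  obtain ⟨x⟩ := ‹ConnectedSpace X›.toNonempty
  let Y := irreducibleComponent x
  have hY : Y ∈ irreducibleComponents X := irreducibleComponent_mem_irreducibleComponents x
  have hcompl : Yᶜ = ⋃₀ (irreducibleComponents X \ {Y}) := by
    ext z
    refine ⟨fun hz => ?_, ?_⟩
    · exact ⟨irreducibleComponent z, ⟨irreducibleComponent_mem_irreducibleComponents z,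
        fun e => hz (e ▸ mem_irreducibleComponent)⟩, mem_irreducibleComponent⟩
    · rintro ⟨Z, ⟨hZ, hZY⟩, hzZ⟩ hzY
      exact hZY (h Z hZ Y hY z hzZ hzY)
  have hclosed : IsClosed Yᶜ := by
    rw [hcompl, Set.sUnion_eq_biUnion]
    exact (NoetherianSpace.finite_irreducibleComponents.subset
      Set.sdiff_subset).isClosed_biUnion fun Z hZ => isClosed_of_mem_irreducibleComponents Z hZ.1
  have huniv : Y = Set.univ := IsClopen.eq_univ
    ⟨isClosed_irreducibleComponent, isClosed_compl_iff.1 hclosed⟩ ⟨x, mem_irreducibleComponent⟩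
  exact (irreducibleSpace_def X).2 (Set.top_eq_univ ▸ huniv ▸ isIrreducible_irreducibleComponent)

theorem isPrime_nilradical_of_connectedSpace (K : Type*) {H : Type*} [Field K] [IsAlgClosed K]
    [CommRing H] [HopfAlgebra K H] [Algebra.FiniteType K H] [ConnectedSpace (PrimeSpectrum H)] :
    (nilradical H).IsPrime := by
  have := Algebra.FiniteType.isNoetherianRing K H
  rw [← PrimeSpectrum.irreducibleSpace_iff_isPrime_nilradical]
  refine irreducibleSpace_of_eq_of_mem_irreducibleComponents fun Y hY Z hZ p hpY hpZ => ?_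
  rw [← PrimeSpectrum.zeroLocus_minimalPrimes] at hY hZ
  obtain ⟨P, hP, rfl⟩ := hY
  obtain ⟨Q, hQ, rfl⟩ := hZ
  obtain ⟨g, -⟩ := exists_algHom_apply_ne_zero_of_isAlgClosed (K := K)
    (one_ne_zero (α := H ⧸ p.asIdeal))
  have hpg : p.asIdeal ≤ RingHom.ker (g.comp (Ideal.Quotient.mkₐ K p.asIdeal)) := fun a ha => by
    simp [RingHom.mem_ker, Ideal.Quotient.eq_zero_iff_mem.2 ha]
  exact congrArg _ (eq_of_mem_minimalPrimes_of_le_ker hP hQ (hpY.trans hpg) (hpZ.trans hpg))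

theorem connectedSpace_of_isOpenMap_of_isClosedMap {X Y : Type*} [TopologicalSpace X]
    [TopologicalSpace Y] [Nonempty X] [PreconnectedSpace Y] {f : X → Y} (hopen : IsOpenMap f)
    (hclosed : IsClosedMap f) {y : Y} (hy : (f ⁻¹' {y}).Subsingleton) : ConnectedSpace X where
  toPreconnectedSpace := preconnectedSpace_iff_clopen.2 fun s hs => by
    by_contra! h
    have himage {t : Set X} (ht : IsClopen t) (hne : t.Nonempty) : f '' t = Set.univ :=
      IsClopen.eq_univ ⟨hclosed _ ht.1, hopen _ ht.2⟩ (hne.image f)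
    obtain ⟨a, ha, hay⟩ : y ∈ f '' s := himage hs h.1 ▸ trivial
    obtain ⟨b, hb, hby⟩ : y ∈ f '' sᶜ := himage hs.compl (Set.nonempty_compl.2 h.2) ▸ trivial
    exact hb (hy hay hby ▸ ha)
  toNonempty := inferInstance

theorem connectedSpace_primeSpectrum {R : Type*} [CommRing R] [Nontrivial R]
    (h : ∀ e : R, IsIdempotentElem e → e = 0 ∨ e = 1) : ConnectedSpace (PrimeSpectrum R) where
  toPreconnectedSpace := preconnectedSpace_iff_clopen.2 fun s hs => by
    obtain ⟨e, he, rfl⟩ := PrimeSpectrum.isClopen_iff.1 hs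
    rcases h e he with rfl | rfl <;> simp
  toNonempty := inferInstance

open scoped TensorProduct

theorem connectedSpace_primeSpectrum_tensorProduct {k A K : Type*} [Field k] [CommRing A]
    [Algebra k A] [ConnectedSpace (PrimeSpectrum A)] [Field K] [Algebra k K]
    [Algebra.IsIntegral k K] (x : A →ₐ[k] k) : ConnectedSpace (PrimeSpectrum (A ⊗[k] K)) := by
  have hx : Function.Surjective x := fun c => ⟨algebraMap k A c, x.commutes c⟩
  let xK : A ⊗[k] K →ₐ[k] K := (Algebra.TensorProduct.lid k K : k ⊗[k] K →ₐ[k] K).comp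
    (Algebra.TensorProduct.map x (AlgHom.id k K))
  have hxK : Function.Surjective xK := fun c => ⟨1 ⊗ₜ c, by simp [xK]⟩
  have hker : RingHom.ker xK = (RingHom.ker x).map (algebraMap A (A ⊗[k] K)) := by
    refine Eq.trans ?_ (Algebra.TensorProduct.rTensor_ker (C := K) x hx)
    ext
    simp [xK, RingHom.mem_ker]
  have := xK.toRingHom.domain_nontrivial
  let pt : PrimeSpectrum A := ⟨RingHom.ker x, RingHom.ker_isPrime _⟩
  have eq_ker {p : PrimeSpectrum (A ⊗[k] K)}
      (hp : PrimeSpectrum.comap (algebraMap A (A ⊗[k] K)) p = pt) : RingHom.ker xK = p.asIdeal := by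
    refine (RingHom.ker_isMaximal_of_surjective _ hxK).eq_of_le p.isPrime.ne_top ?_
    rw [hker, Ideal.map_le_iff_le_comap]
    exact (congrArg PrimeSpectrum.asIdeal hp).ge
  exact connectedSpace_of_isOpenMap_of_isClosedMap (y := pt)
    PrimeSpectrum.isOpenMap_comap_algebraMap_tensorProduct_of_field
    (PrimeSpectrum.isClosedMap_comap_of_isIntegral (algebraMap A (A ⊗[k] K))
      (algebraMap_isIntegral_iff.2 inferInstance))
    fun p hp q hq => PrimeSpectrum.ext ((eq_ker hp).symm.trans (eq_ker hq))

theorem isDomain_of_forall_isIdempotentElem {k A : Type*} [Field k] [CommRing A] [HopfAlgebra k A]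
    [Algebra.FiniteType k A] [IsReduced A]
    (hconn : ∀ e : A, IsIdempotentElem e → e = 0 ∨ e = 1) : IsDomain A := by
  have : Nontrivial A := (Bialgebra.counitAlgHom k A).toRingHom.domain_nontrivial
  have := connectedSpace_primeSpectrum hconn
  let K := AlgebraicClosure k
  have := connectedSpace_primeSpectrum_tensorProduct (K := K) (Bialgebra.counitAlgHom k A)
  have : ConnectedSpace (PrimeSpectrum (K ⊗[k] A)) := (PrimeSpectrum.homeomorphOfRingEquiv
    (Algebra.TensorProduct.comm k A K).toRingEquiv).surjective.connectedSpace
    (Homeomorph.continuous _)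
  have hprime := isPrime_nilradical_of_connectedSpace K (H := K ⊗[k] A)
  let ι : A →ₐ[k] K ⊗[k] A := Algebra.TensorProduct.includeRight
  have hι : Function.Injective ι :=
    Algebra.TensorProduct.includeRight_injective (algebraMap k K).injective
  have hbot : (nilradical (K ⊗[k] A)).comap ι = ⊥ :=
    le_bot_iff.1 fun a ha => ((IsNilpotent.map_iff hι).1 ha).eq_zero
  have : (⊥ : Ideal A).IsPrime := hbot ▸ hprime.comap ι
  exact IsDomain.of_bot_isPrime A

end Irreducible

section Contraction

open scoped TensorProduct
open TensorProduct

section CommSemiring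

variable {R M N : Type*} [CommSemiring R] [AddCommMonoid M] [Module R M] [AddCommMonoid N]
  [Module R N]

theorem rid_lTensor_comm (φ : M →ₗ[R] R) (t : M ⊗[R] N) :
    TensorProduct.rid R N (φ.lTensor N (TensorProduct.comm R M N t)) =
      TensorProduct.lid R N (φ.rTensor N t) := by
  induction t with
  | zero => simp
  | add s t hs ht => simp only [map_add, hs, ht]
  | tmul x y => simp

theorem rid_lTensor_rTensor {M' : Type*} [AddCommMonoid M'] [Module R M'] (p : M →ₗ[R] M')
    (ψ : N →ₗ[R] R) (t : M ⊗[R] N) :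
    TensorProduct.rid R M' (ψ.lTensor M' (p.rTensor N t)) =
      p (TensorProduct.rid R M (ψ.lTensor M t)) := by
  induction t with
  | zero => simp
  | add s t hs ht => simp only [map_add, hs, ht]
  | tmul x y => simp

theorem lid_rTensor_lTensor {N' : Type*} [AddCommMonoid N'] [Module R N'] (p : N →ₗ[R] N')
    (φ : M →ₗ[R] R) (t : M ⊗[R] N) :
    TensorProduct.lid R N' (φ.rTensor N' (p.lTensor M t)) =
      p (TensorProduct.lid R N (φ.rTensor N t)) := by
  induction t with
  | zero => simp
  | add s t hs ht => simp only [map_add, hs, ht]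
  | tmul x y => simp

theorem rid_lTensor_mem {P : Submodule R M} {Q : Submodule R N} {t : M ⊗[R] N}
    (ht : t ∈ LinearMap.range (mapIncl P Q)) (ψ : N →ₗ[R] R) :
    TensorProduct.rid R M (ψ.lTensor M t) ∈ P := by
  obtain ⟨t, rfl⟩ := ht
  induction t with
  | zero => simp
  | add s t hs ht => simpa only [map_add] using add_mem hs ht
  | tmul x y => simpa [mapIncl] using P.smul_mem _ x.2

theorem lid_rTensor_mem {P : Submodule R M} {Q : Submodule R N} {t : M ⊗[R] N}
    (ht : t ∈ LinearMap.range (mapIncl P Q)) (φ : M →ₗ[R] R) :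
    TensorProduct.lid R N (φ.rTensor N t) ∈ Q := by
  obtain ⟨t, rfl⟩ := ht
  induction t with
  | zero => simp
  | add s t hs ht => simpa only [map_add] using add_mem hs ht
  | tmul x y => simpa [mapIncl] using Q.smul_mem _ y.2

theorem eq_of_forall_rid_lTensor_eq [Module.Free R N] {s t : M ⊗[R] N}
    (h : ∀ ψ : N →ₗ[R] R, TensorProduct.rid R M (ψ.lTensor M s) =
      TensorProduct.rid R M (ψ.lTensor M t)) : s = t := by
  classical
  let b := Module.Free.chooseBasis R N
  have coord_eq (i) (u : M ⊗[R] N) :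
      equivFinsuppOfBasisRight b u i = TensorProduct.rid R M ((b.coord i).lTensor M u) := by
    induction u with
    | zero => simp
    | add u v hu hv => simp only [map_add, Finsupp.add_apply, hu, hv]
    | tmul x y => simp
  refine (equivFinsuppOfBasisRight b).injective (Finsupp.ext fun i => ?_)
  rw [coord_eq, coord_eq, h]

theorem eq_of_forall_lid_rTensor_eq [Module.Free R M] {s t : M ⊗[R] N}
    (h : ∀ φ : M →ₗ[R] R, TensorProduct.lid R N (φ.rTensor N s) =
      TensorProduct.lid R N (φ.rTensor N t)) : s = t :=
  (TensorProduct.comm R M N).injective <| eq_of_forall_rid_lTensor_eq fun φ => by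
    rw [rid_lTensor_comm, rid_lTensor_comm, h]

end CommSemiring

variable {k M N : Type*} [Field k] [AddCommGroup M] [Module k M] [AddCommGroup N] [Module k N]

theorem exists_forall_mem_apply_eq (P : Submodule k M) :
    ∃ p : M →ₗ[k] P, ∀ x ∈ P, (p x : M) = x := by
  obtain ⟨p, hp⟩ := P.subtype.exists_leftInverse_of_injective P.ker_subtype
  exact ⟨p, fun x hx => congrArg Subtype.val (LinearMap.congr_fun hp ⟨x, hx⟩)⟩

theorem mem_range_mapIncl_iff {P : Submodule k M} {Q : Submodule k N} {t : M ⊗[k] N} :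
    t ∈ LinearMap.range (mapIncl P Q) ↔
      (∀ ψ : N →ₗ[k] k, TensorProduct.rid k M (ψ.lTensor M t) ∈ P) ∧
      ∀ φ : M →ₗ[k] k, TensorProduct.lid k N (φ.rTensor N t) ∈ Q := by
  refine ⟨fun ht => ⟨rid_lTensor_mem ht, lid_rTensor_mem ht⟩, fun ⟨hP, hQ⟩ => ?_⟩
  obtain ⟨p, hp⟩ := exists_forall_mem_apply_eq P
  obtain ⟨q, hq⟩ := exists_forall_mem_apply_eq Q
  have hpt : (P.subtype ∘ₗ p).rTensor N t = t := eq_of_forall_rid_lTensor_eq fun ψ => by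
    rw [rid_lTensor_rTensor]
    exact hp _ (hP ψ)
  have hqt : (Q.subtype ∘ₗ q).lTensor M t = t := eq_of_forall_lid_rTensor_eq fun φ => by
    rw [lid_rTensor_lTensor]
    exact hq _ (hQ φ)
  refine ⟨map p q t, ?_⟩
  rw [mapIncl, ← LinearMap.comp_apply, ← map_comp, ← LinearMap.rTensor_comp_lTensor,
    LinearMap.comp_apply, hqt, hpt]

end Contraction

section Subcoalgebra

open scoped TensorProduct
open TensorProduct Coalgebra

section CommSemiring

variable {R A : Type*} [CommSemiring R] [AddCommMonoid A] [Module R A] [Coalgebra R A]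

/-- The action `a ↦ ∑ ψ(a₂) a₁` of a functional on a coalgebra, in Sweedler notation. -/
noncomputable def dualActRight (ψ : A →ₗ[R] R) : A →ₗ[R] A :=
  (TensorProduct.rid R A).toLinearMap ∘ₗ ψ.lTensor A ∘ₗ comul

/-- The action `a ↦ ∑ φ(a₁) a₂` of a functional on a coalgebra, in Sweedler notation. -/
noncomputable def dualActLeft (φ : A →ₗ[R] R) : A →ₗ[R] A :=
  (TensorProduct.lid R A).toLinearMap ∘ₗ φ.rTensor A ∘ₗ comul

theorem dualActRight_apply (ψ : A →ₗ[R] R) (a : A) :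
    dualActRight ψ a = TensorProduct.rid R A (ψ.lTensor A (comul a)) :=
  rfl

theorem dualActLeft_apply (φ : A →ₗ[R] R) (a : A) :
    dualActLeft φ a = TensorProduct.lid R A (φ.rTensor A (comul a)) :=
  rfl

theorem dualActRight_counit (a : A) : dualActRight (counit (R := R)) a = a := by
  simp [dualActRight_apply]

theorem dualActLeft_counit (a : A) : dualActLeft (counit (R := R)) a = a := by
  simp [dualActLeft_apply]

theorem comul_dualActRight (ψ : A →ₗ[R] R) (a : A) :
    comul (dualActRight ψ a) = (dualActRight ψ).lTensor A (comul a) := by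
  have comul_rid (t : A ⊗[R] A) : comul (R := R) (TensorProduct.rid R A (ψ.lTensor A t)) =
      (((TensorProduct.rid R A).toLinearMap ∘ₗ ψ.lTensor A).lTensor A)
        (TensorProduct.assoc R A A A (comul.rTensor A t)) := by
    induction t with
    | zero => simp
    | add s t hs ht => simp only [map_add, hs, ht]
    | tmul x y =>
      simp only [LinearMap.lTensor_tmul, TensorProduct.rid_tmul, map_smul, LinearMap.rTensor_tmul]
      induction (comul x : A ⊗[R] A) with
      | zero => simp
      | add s t hs ht => simp only [smul_add, add_tmul, map_add, hs, ht]
      | tmul u v => simp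
  rw [dualActRight_apply, comul_rid, coassoc_apply, ← LinearMap.comp_apply,
    ← LinearMap.lTensor_comp]
  rfl

theorem comul_dualActLeft (φ : A →ₗ[R] R) (a : A) :
    comul (dualActLeft φ a) = (dualActLeft φ).rTensor A (comul a) := by
  have comul_lid (t : A ⊗[R] A) : comul (R := R) (TensorProduct.lid R A (φ.rTensor A t)) =
      (((TensorProduct.lid R A).toLinearMap ∘ₗ φ.rTensor A).rTensor A)
        ((TensorProduct.assoc R A A A).symm (comul.lTensor A t)) := by
    induction t with
    | zero => simp
    | add s t hs ht => simp only [map_add, hs, ht]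
    | tmul x y =>
      simp only [LinearMap.rTensor_tmul, TensorProduct.lid_tmul, map_smul, LinearMap.lTensor_tmul]
      induction (comul y : A ⊗[R] A) with
      | zero => simp
      | add s t hs ht => simp only [smul_add, tmul_add, map_add, hs, ht]
      | tmul u v => simp [smul_tmul']
  rw [dualActLeft_apply, comul_lid, coassoc_symm_apply, ← LinearMap.comp_apply,
    ← LinearMap.rTensor_comp]
  rfl

theorem dualActRight_dualActRight (χ ψ : A →ₗ[R] R) (a : A) :
    dualActRight χ (dualActRight ψ a) = dualActRight (χ ∘ₗ dualActRight ψ) a := by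
  rw [dualActRight_apply, comul_dualActRight, dualActRight_apply, LinearMap.lTensor_comp_apply]

theorem dualActLeft_dualActLeft (χ φ : A →ₗ[R] R) (a : A) :
    dualActLeft χ (dualActLeft φ a) = dualActLeft (χ ∘ₗ dualActLeft φ) a := by
  rw [dualActLeft_apply, comul_dualActLeft, dualActLeft_apply, LinearMap.rTensor_comp_apply]

theorem dualActLeft_dualActRight (φ ψ : A →ₗ[R] R) (a : A) :
    dualActLeft φ (dualActRight ψ a) = dualActRight ψ (dualActLeft φ a) := by
  rw [dualActLeft_apply, comul_dualActRight, lid_rTensor_lTensor, dualActLeft_apply]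

/-- The condition `Δ(C) ⊆ C ⊗ C` on a submodule of a coalgebra, where `C ⊗ C` is replaced by its
image in the ambient tensor square. Over a field, the submodules `C` satisfying it are the
subcoalgebras. -/
def IsSubcoalgebra (C : Submodule R A) : Prop :=
  ∀ c ∈ C, comul c ∈ LinearMap.range (mapIncl C C)

theorem exists_fg_forall_comul_mem {P : Submodule R A} (hP : P.FG) :
    ∃ Q : Submodule R A, Q.FG ∧ ∀ a ∈ P, comul a ∈ LinearMap.range (mapIncl Q Q) := by
  obtain ⟨s, rfl⟩ := hP
  obtain ⟨Q₁, Q₂, hQ₁, hQ₂, hs⟩ := exists_finite_submodule_of_setFinite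
    ((comul (R := R) : A →ₗ[R] A ⊗[R] A) '' s) (s.finite_toSet.image _)
  refine ⟨Q₁ ⊔ Q₂, (Module.Finite.iff_fg.1 hQ₁).sup (Module.Finite.iff_fg.1 hQ₂), ?_⟩
  suffices Submodule.span R (s : Set A) ≤
      (LinearMap.range (mapIncl (Q₁ ⊔ Q₂) (Q₁ ⊔ Q₂))).comap comul from this
  exact Submodule.span_le.2 fun a ha =>
    range_mapIncl_mono le_sup_left le_sup_right (hs ⟨a, ha, rfl⟩)

end CommSemiring

variable {k A : Type*} [Field k] [AddCommGroup A] [Module k A] [Coalgebra k A]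

theorem isSubcoalgebra_span_dualActLeft_dualActRight (a : A) :
    IsSubcoalgebra (Submodule.span k (Set.range fun p : (A →ₗ[k] k) × (A →ₗ[k] k) =>
      dualActLeft p.1 (dualActRight p.2 a))) := by
  set C := Submodule.span k (Set.range fun p : (A →ₗ[k] k) × (A →ₗ[k] k) =>
    dualActLeft p.1 (dualActRight p.2 a))
  have hC (φ ψ : A →ₗ[k] k) : dualActLeft φ (dualActRight ψ a) ∈ C :=
    Submodule.subset_span ⟨(φ, ψ), rfl⟩
  refine fun c hc => mem_range_mapIncl_iff.2 ⟨fun χ => ?_, fun χ => ?_⟩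
  · suffices C ≤ C.comap (dualActRight χ) from this hc
    refine Submodule.span_le.2 ?_
    rintro _ ⟨⟨φ, ψ⟩, rfl⟩
    simpa only [SetLike.mem_coe, Submodule.mem_comap, ← dualActLeft_dualActRight,
      dualActRight_dualActRight] using hC φ (χ ∘ₗ dualActRight ψ)
  · suffices C ≤ C.comap (dualActLeft χ) from this hc
    refine Submodule.span_le.2 ?_
    rintro _ ⟨⟨φ, ψ⟩, rfl⟩
    simpa only [SetLike.mem_coe, Submodule.mem_comap, dualActLeft_dualActLeft]
      using hC (χ ∘ₗ dualActLeft φ) ψ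

theorem exists_fg_isSubcoalgebra_mem (a : A) :
    ∃ C : Submodule k A, C.FG ∧ IsSubcoalgebra C ∧ a ∈ C := by
  refine ⟨_, ?_, isSubcoalgebra_span_dualActLeft_dualActRight a,
    Submodule.subset_span ⟨(counit, counit), ?_⟩⟩
  · obtain ⟨P, hP, haP⟩ := exists_fg_forall_comul_mem (Submodule.fg_span_singleton (R := k) a)
    obtain ⟨Q, hQ, hPQ⟩ := exists_fg_forall_comul_mem hP
    refine hQ.of_le (Submodule.span_le.2 ?_)
    rintro _ ⟨⟨φ, ψ⟩, rfl⟩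
    have hψ : dualActRight ψ a ∈ P :=
      rid_lTensor_mem (haP a (Submodule.mem_span_singleton_self a)) ψ
    exact lid_rTensor_mem (hPQ _ hψ) φ
  · simp only [dualActRight_counit, dualActLeft_counit]

theorem exists_fg_isSubcoalgebra_superset (s : Finset A) :
    ∃ C : Submodule k A, C.FG ∧ IsSubcoalgebra C ∧ (s : Set A) ⊆ C := by
  choose C hfg hsub hmem using exists_fg_isSubcoalgebra_mem (k := k) (A := A)
  refine ⟨⨆ a ∈ s, C a, Submodule.fg_biSup s C fun a _ => hfg a, ?_, fun a ha =>
    Submodule.mem_iSup_of_mem a (Submodule.mem_iSup_of_mem ha (hmem a))⟩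
  set D := ⨆ a ∈ s, C a
  suffices D ≤ (LinearMap.range (mapIncl D D)).comap comul from this
  refine iSup₂_le fun a ha c hc => ?_
  exact range_mapIncl_mono (le_biSup C ha) (le_biSup C ha) (hsub a c hc)

end Subcoalgebra

section ConvolutionSubcoalgebra

open scoped TensorProduct
open WithConv

theorem IsSubcoalgebra.map_convMul_le {R A B : Type*} [CommSemiring R] [Semiring A]
    [Bialgebra R A] [CommSemiring B] [Algebra R B] {C : Submodule R A} (hC : IsSubcoalgebra C)
    (f g : WithConv (A →ₐ[R] B)) :
    C.map (f * g).ofConv.toLinearMap ≤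
      C.map f.ofConv.toLinearMap * C.map g.ofConv.toLinearMap := by
  rintro _ ⟨c, hc, rfl⟩
  obtain ⟨t, ht⟩ := hC c hc
  change (f * g) c ∈ _
  rw [AlgHom.convMul_apply, ← ht]
  clear ht
  induction t with
  | zero => simp
  | add s t hs ht => simpa only [map_add] using add_mem hs ht
  | tmul x y =>
    simpa [TensorProduct.mapIncl] using Submodule.mul_mem_mul
      (Submodule.mem_map_of_mem (f := f.ofConv.toLinearMap) x.2)
      (Submodule.mem_map_of_mem (f := g.ofConv.toLinearMap) y.2)

theorem exists_fg_isSubcoalgebra_one_mem_adjoin_eq_top {k A : Type*} [Field k] [Ring A]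
    [Bialgebra k A] [Algebra.FiniteType k A] :
    ∃ C : Submodule k A, C.FG ∧ IsSubcoalgebra C ∧ 1 ∈ C ∧ Algebra.adjoin k (C : Set A) = ⊤ := by
  classical
  obtain ⟨s, hs⟩ := (Algebra.FiniteType.out : (⊤ : Subalgebra k A).FG)
  obtain ⟨C, hfg, hC, hsC⟩ := exists_fg_isSubcoalgebra_superset (k := k) (insert 1 s)
  rw [Finset.coe_insert, Set.insert_subset_iff] at hsC
  exact ⟨C, hfg, hC, hsC.1, top_le_iff.1 (hs.ge.trans (Algebra.adjoin_mono hsC.2))⟩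

end ConvolutionSubcoalgebra

section LangMap

open WithConv HopfAlgebra

section Bialgebra

variable {R A B : Type*} [CommSemiring R] [CommSemiring A] [Bialgebra R A] [CommSemiring B]
  [Algebra R B]

theorem toConv_comp (h : A →ₐ[R] B) (f : A →ₐ[R] A) :
    toConv (h.comp f) = mapPoints h (toConv f) :=
  rfl

theorem toConv_counitAlgHom : toConv (Bialgebra.counitAlgHom R A) = 1 := by
  ext a
  simp

/-- Translation `x ↦ g x` by a rational point `g` of an affine monoid scheme, on coordinate
rings. -/
noncomputable def translation (g : A →ₐ[R] R) : A →ₐ[R] A :=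
  (mapPoints (Algebra.ofId R A) (toConv g) * toConv (AlgHom.id R A)).ofConv

theorem toConv_translation (g : A →ₐ[R] R) :
    toConv (translation g) = mapPoints (Algebra.ofId R A) (toConv g) * toConv (AlgHom.id R A) :=
  rfl

theorem mapPoints_translation (h : A →ₐ[R] B) (g : A →ₐ[R] R) :
    mapPoints h (toConv (translation g)) = mapPoints (Algebra.ofId R B) (toConv g) * toConv h := by
  rw [toConv_translation, map_mul, mapPoints_ofId]
  rfl

theorem counitAlgHom_comp_translation (g : A →ₐ[R] R) :
    (Bialgebra.counitAlgHom R A).comp (translation g) = g := by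
  apply toConv_injective
  rw [toConv_comp, mapPoints_translation, toConv_counitAlgHom, mul_one]
  rfl

theorem translation_injective : Function.Injective (translation : (A →ₐ[R] R) → A →ₐ[R] A) :=
  Function.LeftInverse.injective (g := (Bialgebra.counitAlgHom R A).comp)
    counitAlgHom_comp_translation

end Bialgebra

theorem toConv_comp_antipodeAlgHom {R A B : Type*} [CommSemiring R] [CommSemiring A]
    [HopfAlgebra R A] [CommSemiring B] [Bialgebra R B] (f : A →ₐ[R] B) :
    toConv (f.comp (antipodeAlgHom R A)) = (toConv f)⁻¹ :=
  rfl

variable {k : Type*} [Field k] [Fintype k]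

theorem frobeniusAlgHom_comp {A B : Type*} [CommRing A] [Algebra k A] [CommRing B]
    [Algebra k B] (h : A →ₐ[k] B) :
    (FiniteField.frobeniusAlgHom k B).comp h = h.comp (FiniteField.frobeniusAlgHom k A) := by
  ext a
  simp

variable (k) in
theorem frobeniusAlgHom_self : FiniteField.frobeniusAlgHom k k = AlgHom.id k k := by
  ext

variable {A B : Type*} [CommRing A] [HopfAlgebra k A] [CommRing B] [Algebra k B]

variable (k A) in
/-- The Lang map `x ↦ x⁻¹ F(x)` of an affine group scheme over a finite field, on coordinate rings,
where `F` is the Frobenius endomorphism. -/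
noncomputable def langMap : A →ₐ[k] A :=
  ((toConv (AlgHom.id k A))⁻¹ * toConv (FiniteField.frobeniusAlgHom k A)).ofConv

theorem toConv_langMap :
    toConv (langMap k A) =
      (toConv (AlgHom.id k A))⁻¹ * toConv (FiniteField.frobeniusAlgHom k A) :=
  rfl

theorem mul_mapPoints_langMap (h : A →ₐ[k] B) :
    toConv h * mapPoints h (toConv (langMap k A)) =
      mapPoints h (toConv (FiniteField.frobeniusAlgHom k A)) := by
  rw [← mul_inv_cancel_left (toConv (AlgHom.id k A)) (toConv (FiniteField.frobeniusAlgHom k A)),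
    map_mul]
  rfl

theorem toConv_langMap_comp_antipodeAlgHom :
    toConv ((langMap k A).comp (antipodeAlgHom k A)) =
      toConv ((FiniteField.frobeniusAlgHom k A).comp (antipodeAlgHom k A)) *
        toConv (AlgHom.id k A) := by
  rw [toConv_comp_antipodeAlgHom, toConv_comp_antipodeAlgHom, toConv_langMap, mul_inv_rev, inv_inv]

theorem counitAlgHom_comp_langMap :
    (Bialgebra.counitAlgHom k A).comp (langMap k A) = Bialgebra.counitAlgHom k A := by
  have h := mul_mapPoints_langMap (Bialgebra.counitAlgHom k A)
  rw [toConv_counitAlgHom, one_mul] at h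
  have := toConv_injective h
  rwa [← frobeniusAlgHom_comp, frobeniusAlgHom_self, AlgHom.id_comp] at this

-- `(g x)⁻¹ F(g x) = x⁻¹ g⁻¹ F(g) F(x) = x⁻¹ F(x)`, as `F` fixes rational points.
theorem translation_comp_langMap (g : A →ₐ[k] k) :
    (translation g).comp (langMap k A) = langMap k A := by
  apply toConv_injective
  apply mul_left_cancel (a := toConv (translation g))
  rw [toConv_comp, mul_mapPoints_langMap, ← toConv_comp, ← frobeniusAlgHom_comp, toConv_comp,
    mapPoints_translation, toConv_translation, mul_assoc, toConv_langMap, mul_inv_cancel_left]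

theorem pow_card_eq_of_forall_langMap_eq_zero (π : A →ₐ[k] B)
    (hπ : ∀ a, Coalgebra.counit (R := k) a = 0 → π (langMap k A a) = 0) (a : A) :
    π a ^ Fintype.card k = π a := by
  have hL : mapPoints π (toConv (langMap k A)) = 1 := by
    ext x
    have := hπ (x - algebraMap k A (Coalgebra.counit x)) (by simp)
    rw [map_sub, map_sub, sub_eq_zero] at this
    simpa [mapPoints] using this
  have h := mul_mapPoints_langMap π
  rw [hL, mul_one] at h
  have := congrArg (fun φ => φ.ofConv a) h
  simpa [mapPoints] using this.symm

end LangMap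

section LangFrame

open WithConv HopfAlgebra

variable {k A : Type*} [Field k] [Fintype k] [CommRing A] [HopfAlgebra k A]

theorem map_frobeniusAlgHom_le_pow {B : Type*} [CommRing B] [Algebra k B] (V : Submodule k B) :
    V.map (FiniteField.frobeniusAlgHom k B).toLinearMap ≤ V ^ Fintype.card k := by
  rintro _ ⟨v, hv, rfl⟩
  exact Submodule.pow_mem_pow V hv _

variable {C : Submodule k A}

theorem IsSubcoalgebra.map_langMap_le (hC : IsSubcoalgebra C) :
    C.map (langMap k A).toLinearMap ≤
      C.map (antipodeAlgHom k A).toLinearMap *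
        C.map (FiniteField.frobeniusAlgHom k A).toLinearMap :=
  hC.map_convMul_le (toConv (AlgHom.id k A))⁻¹ (toConv (FiniteField.frobeniusAlgHom k A))

theorem IsSubcoalgebra.map_map_antipode_langMap_le (hC : IsSubcoalgebra C) :
    (C.map (antipodeAlgHom k A).toLinearMap).map (langMap k A).toLinearMap ≤
      (C.map (antipodeAlgHom k A).toLinearMap).map
        (FiniteField.frobeniusAlgHom k A).toLinearMap * C := by
  have h := hC.map_convMul_le
    (toConv ((FiniteField.frobeniusAlgHom k A).comp (antipodeAlgHom k A))) (toConv (AlgHom.id k A))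
  rw [← toConv_langMap_comp_antipodeAlgHom] at h
  simpa [Submodule.map_comp] using h

theorem IsSubcoalgebra.map_frobeniusAlgHom_le (hC : IsSubcoalgebra C) :
    C.map (FiniteField.frobeniusAlgHom k A).toLinearMap ≤ C * C.map (langMap k A).toLinearMap := by
  have h := hC.map_convMul_le (toConv (AlgHom.id k A)) (toConv (langMap k A))
  have hmul : toConv (AlgHom.id k A) * toConv (langMap k A) =
      toConv (FiniteField.frobeniusAlgHom k A) := mul_inv_cancel_left _ _
  simpa [hmul] using h

theorem IsSubcoalgebra.map_map_antipode_frobeniusAlgHom_le (hC : IsSubcoalgebra C) :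
    (C.map (antipodeAlgHom k A).toLinearMap).map (FiniteField.frobeniusAlgHom k A).toLinearMap ≤
      (C.map (antipodeAlgHom k A).toLinearMap).map (langMap k A).toLinearMap *
        C.map (antipodeAlgHom k A).toLinearMap := by
  have h := hC.map_convMul_le (toConv ((langMap k A).comp (antipodeAlgHom k A)))
    (toConv (antipodeAlgHom k A))
  have hmul : toConv ((langMap k A).comp (antipodeAlgHom k A)) * toConv (antipodeAlgHom k A) =
      toConv ((FiniteField.frobeniusAlgHom k A).comp (antipodeAlgHom k A)) := by
    rw [toConv_langMap_comp_antipodeAlgHom]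
    exact mul_inv_cancel_right _ (toConv (AlgHom.id k A))
  rw [hmul] at h
  simpa [Submodule.map_comp] using h

variable (k A) in
theorem exists_isFrame_map_langMap_le [Algebra.FiniteType k A] :
    ∃ V : Submodule k A, IsFrame V ∧
      V.map (langMap k A).toLinearMap ≤ V ^ (Fintype.card k + 1) ∧
      V.map (FiniteField.frobeniusAlgHom k A).toLinearMap ≤
        V * V.map (langMap k A).toLinearMap := by
  obtain ⟨C, hfg, hC, h1, hadj⟩ := exists_fg_isSubcoalgebra_one_mem_adjoin_eq_top (k := k) (A := A)
  let D := C.map (antipodeAlgHom k A).toLinearMap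
  let F := (FiniteField.frobeniusAlgHom k A).toLinearMap
  let L := (langMap k A).toLinearMap
  let V := C ⊔ D
  have hF {W : Submodule k A} (hW : W ≤ V) : W.map F ≤ V ^ Fintype.card k :=
    (Submodule.map_mono hW).trans (map_frobeniusAlgHom_le_pow V)
  refine ⟨V, ⟨hfg.sup (hfg.map _), Submodule.one_le.2 (le_sup_left (a := C) h1),
    top_le_iff.1 (hadj.ge.trans (Algebra.adjoin_mono (le_sup_left (a := C))))⟩, ?_, ?_⟩
  · rw [Submodule.map_sup]
    refine sup_le ?_ ?_
    · calc C.map L ≤ D * C.map F := hC.map_langMap_le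
        _ ≤ V * V ^ Fintype.card k := mul_le_mul' le_sup_right (hF le_sup_left)
        _ = V ^ (Fintype.card k + 1) := (pow_succ' _ _).symm
    · calc D.map L ≤ D.map F * C := hC.map_map_antipode_langMap_le
        _ ≤ V ^ Fintype.card k * V := mul_le_mul' (hF le_sup_right) le_sup_left
        _ = V ^ (Fintype.card k + 1) := (pow_succ _ _).symm
  · rw [Submodule.map_sup]
    refine sup_le ?_ ?_
    · calc C.map F ≤ C * C.map L := hC.map_frobeniusAlgHom_le
        _ ≤ V * V.map L := mul_le_mul' le_sup_left (Submodule.map_mono le_sup_left)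
    · calc D.map F ≤ D.map L * D := hC.map_map_antipode_frobeniusAlgHom_le
        _ ≤ V.map L * V := mul_le_mul' (Submodule.map_mono le_sup_right) le_sup_right
        _ = V * V.map L := mul_comm _ _

end LangFrame

section Fibre

theorem exists_finrank_eq_forall_mul_mem {k A : Type*} [Field k] [CommRing A] [Algebra k A]
    (R : Subalgebra k A) [Module.Finite R A] {m : Ideal R} (hm : m ≠ ⊤)
    [Module.Finite k (A ⧸ m.map (algebraMap R A))] :
    ∃ W : Submodule k A, W.FG ∧
      Module.finrank k W = Module.finrank k (A ⧸ m.map (algebraMap R A)) ∧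
      ∃ h : A, h ≠ 0 ∧ ∀ a, h * a ∈ W * Subalgebra.toSubmodule R := by
  set I := m.map (algebraMap R A)
  obtain ⟨W, hW⟩ := (I.restrictScalars k).exists_isCompl
  let e : (A ⧸ I) ≃ₗ[k] W := Submodule.quotientEquivOfIsCompl (I.restrictScalars k) W hW
  have hspan : Submodule.span R (W : Set A) ⊔ I.restrictScalars R = ⊤ := by
    refine top_le_iff.1 fun a _ => ?_
    obtain ⟨i, hi, w, hw, rfl⟩ :=
      Submodule.mem_sup.1 (hW.sup_eq_top.ge (Submodule.mem_top (x := a)))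
    exact add_mem (Submodule.mem_sup_right hi) (Submodule.mem_sup_left (Submodule.subset_span hw))
  obtain ⟨r, hr, hrW⟩ := exists_smul_top_le_span_of_quotient (m := m)
    (W := Submodule.span R (W : Set A)) hspan
  refine ⟨W, Module.Finite.iff_fg.1 (Module.Finite.equiv e), e.finrank_eq.symm, r, ?_, fun a => ?_⟩
  · rintro h0
    have : r = 0 := Subtype.ext h0
    rw [this, zero_sub, neg_mem_iff] at hr
    exact hm ((Ideal.eq_top_iff_one m).2 hr)
  · rw [← restrictScalars_span_eq_mul_toSubmodule]
    exact hrW a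

end Fibre

section Bounds

variable {k A : Type*} [Field k] [Fintype k] [CommRing A] [HopfAlgebra k A]
  [Algebra.FiniteType k A]

theorem exists_finrank_le_card_algHom_forall_mul_mem [Module.Finite (langMap k A).range A] :
    ∃ W : Submodule k A, W.FG ∧ Module.finrank k W ≤ Nat.card (A →ₐ[k] k) ∧
      ∃ h : A, h ≠ 0 ∧ ∀ a, h * a ∈ W * Subalgebra.toSubmodule (langMap k A).range := by
  let L := langMap k A
  let m : Ideal L.range := RingHom.ker ((Bialgebra.counitAlgHom k A).comp L.range.val)
  let I := m.map (algebraMap L.range A)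
  have hLI (a : A) (ha : Coalgebra.counit (R := k) a = 0) : L a ∈ I :=
    Ideal.mem_map_of_mem (algebraMap L.range A) (x := ⟨L a, a, rfl⟩)
      ((DFunLike.congr_fun counitAlgHom_comp_langMap a).trans ha)
  have hpow (x : A ⧸ I) : x ^ Fintype.card k = x := by
    obtain ⟨a, rfl⟩ := Ideal.Quotient.mkₐ_surjective k I x
    exact pow_card_eq_of_forall_langMap_eq_zero (Ideal.Quotient.mkₐ k I)
      (fun a ha => Ideal.Quotient.eq_zero_iff_mem.2 (hLI a ha)) a
  obtain ⟨hfin, hcard⟩ := finite_and_finrank_le_card_algHom_of_pow_card_eq hpow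
  have := finite_algHom_of_finiteType k A
  have hpoints : Nat.card (A ⧸ I →ₐ[k] k) ≤ Nat.card (A →ₐ[k] k) :=
    Nat.card_le_card_of_injective (fun x => x.comp (Ideal.Quotient.mkₐ k I)) fun x y h =>
      (AlgHom.cancel_right (Ideal.Quotient.mkₐ_surjective k I)).1 h
  obtain ⟨W, hW, hrank, hh⟩ :=
    exists_finrank_eq_forall_mul_mem L.range (m := m) (RingHom.ker_ne_top _)
  exact ⟨W, hW, hrank.trans_le (hcard.trans hpoints), hh⟩

theorem card_algHom_le_pow [IsDomain A] {d : ℕ} (hdim : ringKrullDim A = d)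
    {V : Submodule k A} (hV : IsFrame V)
    (hVL : V.map (langMap k A).toLinearMap ≤ V ^ (Fintype.card k + 1))
    [Module.Finite (langMap k A).range A] :
    Nat.card (A →ₐ[k] k) ≤ (Fintype.card k + 1) ^ d := by
  obtain ⟨b, hb⟩ := exists_linearIndependent_range_of_comp_eq translation_injective
    (translation_comp_langMap (k := k) (A := A))
  simpa using hV.card_le_pow_of_linearIndependent hdim
    (Nat.le_add_right_of_le Fintype.one_lt_card)
    (injective_of_finite_range_of_ringKrullDim_eq hdim (langMap k A)) hVL hb

theorem pow_le_card_algHom [IsDomain A] {d : ℕ} (hdim : ringKrullDim A = d)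
    {V : Submodule k A} (hV : IsFrame V) {c p : ℕ} (hp : Fintype.card k = p + 1)
    (hc : ∀ j, V ^ (c + p * j) ≤ V ^ c * (V ^ j).map (langMap k A).toLinearMap)
    [Module.Finite (langMap k A).range A] :
    p ^ d ≤ Nat.card (A →ₐ[k] k) := by
  obtain rfl | hp2 : p = 1 ∨ 2 ≤ p := by
    have := Fintype.one_lt_card (α := k)
    lia
  · have := finite_algHom_of_finiteType k A
    have : Nonempty (A →ₐ[k] k) := ⟨Bialgebra.counitAlgHom k A⟩
    rw [one_pow]
    exact Nat.card_pos
  · obtain ⟨W, hW, hrank, h, h0, hhW⟩ :=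
      exists_finrank_le_card_algHom_forall_mul_mem (k := k) (A := A)
    exact (hV.pow_le_finrank_of_forall_mul_mem hdim hp2 hc hW h0 hhW).trans hrank

end Bounds

/-- Point count bounds for a connected (reduced) linear algebraic group of dimension `d` over a
finite field with `q` elements, phrased via its Hopf algebra of regular functions:
`(q-1)^d ≤ #M(k) ≤ (q+1)^d`. -/
theorem stmt18 {k A : Type*} [Field k] [Fintype k] [CommRing A] [HopfAlgebra k A]
    [Algebra.FiniteType k A] [IsReduced A]
    (hconn : ∀ e : A, IsIdempotentElem e → e = 0 ∨ e = 1)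
    (d : ℕ) (hdim : ringKrullDim A = d) :
    (Fintype.card k - 1) ^ d ≤ Nat.card (A →ₐ[k] k) ∧
      Nat.card (A →ₐ[k] k) ≤ (Fintype.card k + 1) ^ d := by
  have := isDomain_of_forall_isIdempotentElem (k := k) hconn
  obtain ⟨V, hV, hVL, hVF⟩ := exists_isFrame_map_langMap_le k A
  obtain ⟨c, hc⟩ := exists_pow_le_mul_map_pow hV.fg (L := langMap k A) (p := Fintype.card k - 1)
    fun v hv => by
      rw [Nat.sub_add_cancel Fintype.card_pos]
      exact hVF ⟨v, hv, rfl⟩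
  have : Module.Finite (langMap k A).range A :=
    hV.finite_range (Nat.le_sub_of_add_le Fintype.one_lt_card) hc
  exact ⟨pow_le_card_algHom hdim hV (Nat.sub_add_cancel Fintype.card_pos).symm hc,
    card_algHom_le_pow hdim hV hVL⟩
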